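/- Let d, N ≥ 1 and let P ∈ ℂ^{(d+N)×(d+N)} be a symmetric matrix written in block form P = [[P_xx, P_xθ],[P_θx, P_θθ]] with P_xx ∈ ℂ^{d×d}, P_xθ ∈ ℂ^{d×N}, P_θx = (P_xθ)^t ∈ ℂ^{N×d}, P_θθ ∈ ℂ^{N×N}. Assume the N rows of the block matrix (P_θx P_θθ) ∈ ℂ^{N×(d+N)} are linearly independent over ℂ. Let p be the quadratic form p(x,θ) = ⟨(x,θ), P(x,θ)⟩, so that its gradients are p'_x(x,θ) = 2(P_xx x + P_xθ θ) and p'_θ(x,θ) = 2(P_θx x + P_θθ θ). Then there exist matrices A ∈ ℂ^{N×d}, B ∈ ℂ^{N×d} and C ∈ ℂ^{N×N} such that θ = A x + B p'_x(x,θ) + C p'_θ(x,θ) for all x ∈ ℝ^d and θ ∈ ℝ^N. -/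

import Mathlib

open Matrix

/-- Lemma: solving for θ from the gradients of a quadratic form with
Gaussian generator matrix.  Let `P` be a symmetric complex `(d+N)×(d+N)` matrix, indexed by
`Fin d ⊕ Fin N`, whose bottom `N` rows `(P_θx  P_θθ)` are linearly independent over `ℂ`.
Writing `p(x,θ) = ⟨(x,θ), P(x,θ)⟩`, the gradients are `p'_x(x,θ) = 2(P_xx x + P_xθ θ)`
(the `Sum.inl` components of `2 P (x,θ)`) and `p'_θ(x,θ) = 2(P_θx x + P_θθ θ)`
(the `Sum.inr` components).  Then there exist matrices `A, B ∈ ℂ^{N×d}` and `C ∈ ℂ^{N×N}`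
with `θ = A x + B p'_x(x,θ) + C p'_θ(x,θ)` for all real `x, θ`. -/
theorem stmt_0 (d N : ℕ) (hd : 1 ≤ d) (hN : 1 ≤ N)
    (P : Matrix (Fin d ⊕ Fin N) (Fin d ⊕ Fin N) ℂ) (hP : P.IsSymm)
    (hrows : LinearIndependent ℂ (fun i : Fin N => P (Sum.inr i))) :
    ∃ (A B : Matrix (Fin N) (Fin d) ℂ) (C : Matrix (Fin N) (Fin N) ℂ),
      ∀ (x : Fin d → ℝ) (θ : Fin N → ℝ),
        (fun i : Fin N => (θ i : ℂ)) =
          A.mulVec (fun j : Fin d => (x j : ℂ))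
          + B.mulVec (fun j : Fin d =>
              2 * P.mulVec (Sum.elim (fun j' : Fin d => (x j' : ℂ))
                  (fun i' : Fin N => (θ i' : ℂ))) (Sum.inl j))
          + C.mulVec (fun i : Fin N =>
              2 * P.mulVec (Sum.elim (fun j' : Fin d => (x j' : ℂ))
                  (fun i' : Fin N => (θ i' : ℂ))) (Sum.inr i)) := by
  have hinj : Function.Injective (P.submatrix id (Sum.inr : Fin N → Fin d ⊕ Fin N)).mulVec := by
    rw [Matrix.mulVec_injective_iff]
    have e : (P.submatrix id (Sum.inr : Fin N → Fin d ⊕ Fin N)).col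
        = fun i : Fin N => P (Sum.inr i) := by
      funext i k
      exact (hP.apply _ _)
    rw [e]
    exact hrows
  obtain ⟨g, hg⟩ := LinearMap.exists_leftInverse_of_injective
    (Matrix.mulVecLin (P.submatrix id (Sum.inr : Fin N → Fin d ⊕ Fin N)))
    (LinearMap.ker_eq_bot.2 hinj)
  obtain ⟨L, rfl⟩ : ∃ L : Matrix (Fin N) (Fin d ⊕ Fin N) ℂ, g = L.mulVecLin :=
    ⟨LinearMap.toMatrix' g, by
      rw [← Matrix.toLin'_apply', Matrix.toLin'_toMatrix']⟩
  refine ⟨-(L * P.submatrix id Sum.inl), fun i j => L i (Sum.inl j) / 2,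
    fun i j => L i (Sum.inr j) / 2, fun x θ => ?_⟩
  set X : Fin d → ℂ := fun j => (x j : ℂ)
  set T : Fin N → ℂ := fun j => (θ j : ℂ)
  have h1 : L *ᵥ (P.submatrix id Sum.inr *ᵥ T) = T := LinearMap.congr_fun hg T
  have h2 : P *ᵥ (Sum.elim X T) = P.submatrix id Sum.inl *ᵥ X + P.submatrix id Sum.inr *ᵥ T := by
    funext k
    simp [Matrix.mulVec, dotProduct, Fintype.sum_sum_type]
  have h3 : L *ᵥ (P *ᵥ (Sum.elim X T)) = L *ᵥ (P.submatrix id Sum.inl *ᵥ X) + T := by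
    rw [h2, Matrix.mulVec_add, h1]
  generalize P *ᵥ (Sum.elim X T) = v at h3 ⊢
  rw [Matrix.neg_mulVec, ← Matrix.mulVec_mulVec, eq_sub_of_add_eq' h3.symm]
  funext i
  simp only [Pi.sub_apply, Pi.add_apply, Pi.neg_apply]
  have h4 : (L *ᵥ v) i = ∑ j, L i (Sum.inl j) / 2 * (2 * v (Sum.inl j))
      + ∑ j, L i (Sum.inr j) / 2 * (2 * v (Sum.inr j)) := by
    simp only [Matrix.mulVec, dotProduct, Fintype.sum_sum_type]
    congr 1 <;> exact Finset.sum_congr rfl fun j _ => by ring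
  rw [h4]
  simp only [Matrix.mulVec, dotProduct]
  ring
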